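/- arXiv:1612.02905 — 2 statements merged into one kernel-verified Lean document; each statement's English description precedes it below -/
import Mathlib

section
/- Let ε and b satisfy 0 < ε ≤ 1, 0 < b, and bε ≤ 1/2, and let u = (0, 0, aε) and c = (0, bε, 0). Then the geodesic distance between u and c is strictly greater than the Euclidean distance: d_g(u, c) > ‖u − c‖ = bε√(a²/b² + 1). -/
open Real MeasureTheory

noncomputable section

/-- `ℝ³` with the Euclidean norm. -/
abbrev E3 : Type := EuclideanSpace ℝ (Fin 3)

/-- The bump function `f(y) = A (1 + cos (π y))`. -/
def f (A y : ℝ) : ℝ := A * (1 + Real.cos (Real.pi * y))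

/-- The g-length of a path `γ` in the perturbed metric:
`L_g(γ) = ∫₀¹ √(γ₁′(t)² + γ₂′(t)² + (1 + f(γ₂(t))) γ₃′(t)²) dt`. -/
def Lg (A : ℝ) (γ : ℝ → E3) : ℝ :=
  ∫ t in (0:ℝ)..1,
    Real.sqrt ((deriv γ t 0) ^ 2 + (deriv γ t 1) ^ 2
      + (1 + f A (γ t 1)) * (deriv γ t 2) ^ 2)

/-- The geodesic distance: the infimum of g-lengths of C¹ paths from `p` to `q`. -/
def dg (A : ℝ) (p q : E3) : ℝ :=
  sInf {L : ℝ | ∃ γ : ℝ → E3,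
    ContDiff ℝ 1 γ ∧ γ 0 = p ∧ γ 1 = q ∧ L = Lg A γ}

/-- A point of `ℝ³` from its three coordinates. -/
def pt (x y z : ℝ) : E3 := (EuclideanSpace.equiv (Fin 3) ℝ).symm ![x, y, z]

/-- `a = 1/√2`. -/
def a : ℝ := 1 / Real.sqrt 2

/-- `ξ₀ = √(1 + f(0)) − 1`. -/
def ξ₀ (A : ℝ) : ℝ := Real.sqrt (1 + f A 0) - 1

/-!
The proof is a calibration argument. For the metric `dx² + dy² + (1 + f(y)) dz²`, take a covector
field `ξ dx + η(y) dy + ζ dz` with constant `ξ, ζ`. It is closed, so its integral along a path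
depends only on the endpoints, and if its dual norm is at most one, that integral is a lower bound
for the length. Let `(ξ, μ, ζ)` be the Euclidean unit vector from `p` to `q`. Since `f ≥ 0` there is
room to choose `|η| ≥ |μ|`, with `η` of either sign, and strictly so where `f > 0` if `ζ ≠ 0`. As
`f` vanishes only at the odd integers, integrating from `p 1` to `q 1 ≠ p 1` gives strictly more
than `‖p - q‖`. The bound depends only on the endpoints, so it survives the infimum over paths.
-/

section Bump

variable {A : ℝ}

lemma continuous_f (A : ℝ) : Continuous (f A) := by
  unfold f
  fun_prop

lemma f_nonneg (hA : 0 ≤ A) (y : ℝ) : 0 ≤ f A y :=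
  mul_nonneg hA (by linarith [neg_one_le_cos (π * y)])

lemma f_eq_zero_iff (hA : A ≠ 0) {y : ℝ} : f A y = 0 ↔ ∃ n : ℤ, y = 2 * n + 1 := by
  have h_cos : f A y = 0 ↔ cos (π * y) = -1 := by
    simp only [f, mul_eq_zero, hA, false_or, add_eq_zero_iff_eq_neg']
  rw [h_cos, cos_eq_neg_one_iff]
  refine exists_congr fun n ↦ ?_
  rw [show π + n * (2 * π) = π * (2 * n + 1) by ring, mul_right_inj' pi_ne_zero, eq_comm]

lemma exists_mem_uIcc_f_pos (hA : 0 < A) {y₀ y₁ : ℝ} (hy : y₀ ≠ y₁) :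
    ∃ y ∈ Set.uIcc y₀ y₁, 0 < f A y := by
  obtain ⟨y, hy_irr, hy₀, hy₁⟩ := exists_irrational_btwn (inf_lt_sup.2 hy)
  refine ⟨y, ⟨hy₀.le, hy₁.le⟩, (f_nonneg hA.le y).lt_of_ne' fun hf ↦ ?_⟩
  obtain ⟨n, rfl⟩ := (f_eq_zero_iff hA.ne').1 hf
  exact hy_irr ⟨2 * n + 1, by push_cast; rfl⟩

end Bump

lemma mul_abs_sub_lt_abs_integral {φ : ℝ → ℝ} (hφ : Continuous φ) {m y₀ y₁ : ℝ} (hy : y₀ ≠ y₁)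
    (h_le : ∀ y ∈ Set.uIcc y₀ y₁, m ≤ φ y) (h_lt : ∃ y ∈ Set.uIcc y₀ y₁, m < φ y) :
    m * |y₁ - y₀| < |∫ y in y₀..y₁, φ y| := by
  wlog hlt : y₀ < y₁ generalizing y₀ y₁
  · rw [intervalIntegral.integral_symm, abs_neg, abs_sub_comm]
    rw [Set.uIcc_comm] at h_le h_lt
    exact this hy.symm h_le h_lt (hy.lt_or_gt.resolve_left hlt)
  rw [Set.uIcc_of_le hlt.le] at h_le h_lt
  calc m * |y₁ - y₀| = ∫ _ in y₀..y₁, m := by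
        rw [intervalIntegral.integral_const, smul_eq_mul, abs_of_pos (sub_pos.2 hlt), mul_comm]
    _ < ∫ y in y₀..y₁, φ y :=
        intervalIntegral.integral_lt_integral_of_continuousOn_of_le_of_exists_lt hlt
          continuousOn_const hφ.continuousOn (fun y hy ↦ h_le y (Set.Ioc_subset_Icc_self hy)) h_lt
    _ ≤ |∫ y in y₀..y₁, φ y| := le_abs_self _

section Coordinates

variable {ι : Type*} [Fintype ι] {γ : ℝ → EuclideanSpace ℝ ι}

lemma hasDerivAt_coord (hγ : ContDiff ℝ 1 γ) (i : ι) (t : ℝ) :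
    HasDerivAt (fun t ↦ γ t i) (deriv γ t i) t :=
  (EuclideanSpace.proj i : EuclideanSpace ℝ ι →L[ℝ] ℝ).hasFDerivAt.comp_hasDerivAt t
    (hγ.differentiable one_ne_zero t).hasDerivAt

lemma continuous_deriv_coord (hγ : ContDiff ℝ 1 γ) (i : ι) :
    Continuous fun t ↦ deriv γ t i := by
  have := hγ.continuous_deriv le_rfl
  fun_prop

lemma integral_deriv_coord (hγ : ContDiff ℝ 1 γ) (i : ι) (s t : ℝ) :
    ∫ τ in s..t, deriv γ τ i = γ t i - γ s i :=
  intervalIntegral.integral_eq_sub_of_hasDerivAt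
    (fun τ _ ↦ hasDerivAt_coord hγ i τ) ((continuous_deriv_coord hγ i).intervalIntegrable s t)

end Coordinates

lemma covector_le_sqrt {G : ℝ} (hG : 0 < G) {ξ η ζ : ℝ} (h : ξ ^ 2 + η ^ 2 + ζ ^ 2 / G ≤ 1)
    (x y z : ℝ) : ξ * x + η * y + ζ * z ≤ √(x ^ 2 + y ^ 2 + G * z ^ 2) := by
  have lagrange_identity : (ξ ^ 2 + η ^ 2 + ζ ^ 2 / G) * (x ^ 2 + y ^ 2 + G * z ^ 2)
      - (ξ * x + η * y + ζ * z) ^ 2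
      = (ξ * y - η * x) ^ 2 + (G * ξ * z - ζ * x) ^ 2 / G + (G * η * z - ζ * y) ^ 2 / G := by
    field_simp
    ring
  have cauchy_schwarz : (ξ * x + η * y + ζ * z) ^ 2
      ≤ (ξ ^ 2 + η ^ 2 + ζ ^ 2 / G) * (x ^ 2 + y ^ 2 + G * z ^ 2) :=
    sub_nonneg.1 (lagrange_identity ▸ by positivity)
  exact le_sqrt_of_sq_le (cauchy_schwarz.trans (mul_le_of_le_one_left (by positivity) h))

/-- The closed covector field `ξ dx + η(y) dy + ζ dz` has dual norm at most one for the metric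
`dx² + dy² + (1 + f(y)) dz²`, so it calibrates lengths from below. -/
structure IsCalibration (A ξ : ℝ) (η : ℝ → ℝ) (ζ : ℝ) : Prop where
  continuous : Continuous η
  dual_norm_le (y : ℝ) : ξ ^ 2 + η y ^ 2 + ζ ^ 2 / (1 + f A y) ≤ 1

namespace IsCalibration

variable {A ξ ζ : ℝ} {η : ℝ → ℝ}

lemma neg_snd (h : IsCalibration A ξ η ζ) : IsCalibration A ξ (-η) ζ where
  continuous := h.continuous.neg
  dual_norm_le y := by simpa using h.dual_norm_le y

lemma le_Lg (h : IsCalibration A ξ η ζ) (hA : 0 ≤ A) {γ : ℝ → E3} (hγ : ContDiff ℝ 1 γ) :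
    ξ * (γ 1 0 - γ 0 0) + (∫ y in γ 0 1..γ 1 1, η y) + ζ * (γ 1 2 - γ 0 2) ≤ Lg A γ := by
  have hγ_cont (i : Fin 3) : Continuous fun t ↦ γ t i := by
    have := hγ.continuous
    fun_prop
  have hγ' := continuous_deriv_coord hγ
  have hx : Continuous fun t ↦ ξ * deriv γ t 0 := (hγ' 0).const_mul ξ
  have hy : Continuous fun t ↦ η (γ t 1) * deriv γ t 1 :=
    (h.continuous.comp (hγ_cont 1)).mul (hγ' 1)
  have hz : Continuous fun t ↦ ζ * deriv γ t 2 := (hγ' 2).const_mul ζ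
  have h_speed : Continuous fun t ↦
      √(deriv γ t 0 ^ 2 + deriv γ t 1 ^ 2 + (1 + f A (γ t 1)) * deriv γ t 2 ^ 2) := by
    have := (continuous_f A).comp' (hγ_cont 1)
    fun_prop
  have h_subst : ∫ t in (0 : ℝ)..1, η (γ t 1) * deriv γ t 1 = ∫ y in γ 0 1..γ 1 1, η y :=
    intervalIntegral.integral_comp_mul_deriv (fun t _ ↦ hasDerivAt_coord hγ 1 t)
      (hγ' 1).continuousOn h.continuous
  calc ξ * (γ 1 0 - γ 0 0) + (∫ y in γ 0 1..γ 1 1, η y) + ζ * (γ 1 2 - γ 0 2)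
      = ∫ t in (0 : ℝ)..1,
          (ξ * deriv γ t 0 + η (γ t 1) * deriv γ t 1 + ζ * deriv γ t 2) := by
        rw [intervalIntegral.integral_add ((hx.fun_add hy).intervalIntegrable 0 1)
            (hz.intervalIntegrable 0 1),
          intervalIntegral.integral_add (hx.intervalIntegrable 0 1) (hy.intervalIntegrable 0 1),
          intervalIntegral.integral_const_mul, intervalIntegral.integral_const_mul,
          integral_deriv_coord hγ, integral_deriv_coord hγ, h_subst]
    _ ≤ Lg A γ :=
        intervalIntegral.integral_mono_on zero_le_one
          (((hx.fun_add hy).fun_add hz).intervalIntegrable 0 1) (h_speed.intervalIntegrable 0 1)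
          fun t _ ↦ covector_le_sqrt (by linarith [f_nonneg hA (γ t 1)])
            (h.dual_norm_le (γ t 1)) _ _ _

lemma le_dg (h : IsCalibration A ξ η ζ) (hA : 0 ≤ A) (p q : E3) :
    ξ * (q 0 - p 0) + (∫ y in p 1..q 1, η y) + ζ * (q 2 - p 2) ≤ dg A p q := by
  refine le_csInf ⟨_, AffineMap.lineMap p q, AffineMap.contDiff_lineMap p q,
    AffineMap.lineMap_apply_zero p q, AffineMap.lineMap_apply_one p q, rfl⟩ ?_
  rintro L ⟨γ, hγ, rfl, rfl, rfl⟩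
  exact h.le_Lg hA hγ

lemma abs_integral_le_dg (h : IsCalibration A ξ η ζ) (hA : 0 ≤ A) (p q : E3) :
    ξ * (q 0 - p 0) + |∫ y in p 1..q 1, η y| + ζ * (q 2 - p 2) ≤ dg A p q := by
  have h_pos := h.le_dg hA p q
  have h_neg := h.neg_snd.le_dg hA p q
  simp only [Pi.neg_apply, intervalIntegral.integral_neg] at h_neg
  cases abs_cases (∫ y in p 1..q 1, η y) <;> linarith

end IsCalibration

section UnitCovector

variable {A ξ μ ζ : ℝ}

/-- The largest `dy`-component that, together with the components `ξ` and `ζ` along `dx` and `dz`,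
gives a covector of dual norm at most one at height `y`; it is `0` if there is no such component. -/
def calibrationSlope (A ξ ζ y : ℝ) : ℝ := √(1 - ξ ^ 2 - ζ ^ 2 / (1 + f A y))

lemma abs_le_calibrationSlope (hA : 0 ≤ A) (h : ξ ^ 2 + μ ^ 2 + ζ ^ 2 ≤ 1) (y : ℝ) :
    |μ| ≤ calibrationSlope A ξ ζ y := by
  have := div_le_self (sq_nonneg ζ) (by linarith [f_nonneg hA y] : 1 ≤ 1 + f A y)
  exact abs_le_sqrt (by linarith)

lemma abs_lt_calibrationSlope (hζ : ζ ≠ 0) (h : ξ ^ 2 + μ ^ 2 + ζ ^ 2 ≤ 1) {y : ℝ}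
    (hy : 0 < f A y) : |μ| < calibrationSlope A ξ ζ y := by
  have := div_lt_self (by positivity : 0 < ζ ^ 2) (by linarith : 1 < 1 + f A y)
  exact (lt_sqrt (abs_nonneg μ)).2 (by rw [sq_abs]; linarith)

lemma isCalibration_calibrationSlope (hA : 0 ≤ A) (h : ξ ^ 2 + ζ ^ 2 ≤ 1) :
    IsCalibration A ξ (calibrationSlope A ξ ζ) ζ where
  continuous := by
    have hf (y : ℝ) : 1 + f A y ≠ 0 := by linarith [f_nonneg hA y]
    have := continuous_f A
    unfold calibrationSlope
    fun_prop (disch := exact hf)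
  dual_norm_le y := by
    have := div_le_self (sq_nonneg ζ) (by linarith [f_nonneg hA y] : 1 ≤ 1 + f A y)
    rw [calibrationSlope, sq_sqrt (by linarith)]
    linarith

end UnitCovector

theorem dg_uc_gt_euclidean_general {A : ℝ} (hA : 0 < A) {p q : E3} (hy : p 1 ≠ q 1)
    (hz : p 2 ≠ q 2) : ‖p - q‖ < dg A p q := by
  set D := ‖p - q‖
  have hD : 0 < D := norm_sub_pos_iff.2 fun hpq ↦ hy (congrArg (· 1) hpq)
  have hD_sq : D ^ 2 = (q 0 - p 0) ^ 2 + (q 1 - p 1) ^ 2 + (q 2 - p 2) ^ 2 := by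
    simp only [D, norm_sub_rev p q, EuclideanSpace.real_norm_sq_eq, Fin.sum_univ_three,
      PiLp.sub_apply]
  set ξ := (q 0 - p 0) / D with hξ
  set μ := (q 1 - p 1) / D with hμ
  set ζ := (q 2 - p 2) / D with hζ
  have h_unit : ξ ^ 2 + μ ^ 2 + ζ ^ 2 = 1 := by
    rw [hξ, hμ, hζ]
    field_simp
    linarith
  have hζ_ne : ζ ≠ 0 := div_ne_zero (sub_ne_zero.2 hz.symm) hD.ne'
  have h_cal : IsCalibration A ξ (calibrationSlope A ξ ζ) ζ :=
    isCalibration_calibrationSlope hA.le (by linarith [sq_nonneg μ])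
  have h_abs : |μ| * |q 1 - p 1| = μ * (q 1 - p 1) := by
    rw [hμ, abs_div, abs_of_pos hD, div_mul_eq_mul_div, abs_mul_abs_self, div_mul_eq_mul_div]
  calc D = ξ * (q 0 - p 0) + |μ| * |q 1 - p 1| + ζ * (q 2 - p 2) := by
        rw [h_abs, hξ, hμ, hζ]
        field_simp
        linarith
    _ < ξ * (q 0 - p 0) + |∫ y in p 1..q 1, calibrationSlope A ξ ζ y| + ζ * (q 2 - p 2) := by
        gcongr
        obtain ⟨y, hy_mem, hy_pos⟩ := exists_mem_uIcc_f_pos hA hy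
        exact mul_abs_sub_lt_abs_integral h_cal.continuous hy
          (fun y _ ↦ abs_le_calibrationSlope hA.le h_unit.le y)
          ⟨y, hy_mem, abs_lt_calibrationSlope hζ_ne h_unit.le hy_pos⟩
    _ ≤ dg A p q := h_cal.abs_integral_le_dg hA.le p q

lemma norm_pt_sub_pt_eq (α : ℝ) {b ε : ℝ} (hb : 0 < b) (hε : 0 ≤ ε) :
    ‖pt 0 0 (α * ε) - pt 0 (b * ε) 0‖ = b * ε * √(α ^ 2 / b ^ 2 + 1) := by
  have h_sq : (b * ε) ^ 2 + (α * ε) ^ 2 = (b * ε) ^ 2 * (α ^ 2 / b ^ 2 + 1) := by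
    field_simp
    ring
  calc ‖pt 0 0 (α * ε) - pt 0 (b * ε) 0‖ = √((b * ε) ^ 2 + (α * ε) ^ 2) := by
        simp [EuclideanSpace.norm_eq, Fin.sum_univ_three, pt]
    _ = b * ε * √(α ^ 2 / b ^ 2 + 1) := by
        rw [h_sq, sqrt_mul (by positivity), sqrt_sq (by positivity)]

/-- The geodesic distance between `u = (0,0,aε)` and `c = (0,bε,0)` is
strictly greater than the Euclidean distance `‖u − c‖ = bε√(a²/b² + 1)`. -/
theorem dg_uc_gt_euclidean (A : ℝ) (hA0 : 0 < A) (hA : A ≤ 3 / 8)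
    (ε b : ℝ) (hε0 : 0 < ε) (hε1 : ε ≤ 1) (hb : 0 < b) (hbε : b * ε ≤ 1 / 2) :
    ‖pt 0 0 (a * ε) - pt 0 (b * ε) 0‖ < dg A (pt 0 0 (a * ε)) (pt 0 (b * ε) 0) ∧
    ‖pt 0 0 (a * ε) - pt 0 (b * ε) 0‖ = b * ε * Real.sqrt (a ^ 2 / b ^ 2 + 1) :=
  ⟨dg_uc_gt_euclidean_general hA0 (by simp [pt, hb.ne', hε0.ne']) (by simp [pt, a, hε0.ne']),
    norm_pt_sub_pt_eq a hb hε0.le⟩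
end
end

section
/- There exists ε₀ > 0 such that for all ε with 0 < ε < ε₀ and all ξ with 0 ≤ ξ < ξ₀, the points u = (0, 0, aε), v = (0, 0, −aε), w = (aε(1 + ξ), 0, 0), p = (−aε(1 + ξ), 0, 0) satisfy d_g(p, w) < d_g(u, v); that is, the geodesic distance between the two points on the x-axis is strictly smaller than the geodesic distance between the two points on the z-axis. -/
open Real MeasureTheory

noncomputable section

/-!
Straight segments parallel to the `xy`-plane have their Euclidean length, so the two points on the
`x`-axis are at distance at most `2aε(1 + ξ)`.

For the points on the `z`-axis, put `H = √(1 + f(0))`. By the half-angle formula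
`H² cos²(πy/2) ≤ 1 + f(y)`, so `g` dominates `dy² + H² cos²(πy/2) dz²`, which is the metric of the
sphere of radius `2/π` with latitude `πy/2` and longitude `πHz/2`. There `arcsin (cos α sin β)` is
the signed distance, in units of the radius, from the meridian great circle `β = 0`. It is
1-Lipschitz, and on the equator it equals `β` as long as `|β| ≤ π/2`. Hence short segments of the
`z`-axis have least length among all curves with the same endpoints, and the two points are at
distance at least `2aεH`.
-/

/-- The speed of the path `γ` at time `t` in the perturbed metric, i.e. the integrand of `Lg`. -/
def gSpeed (A : ℝ) (γ : ℝ → E3) (t : ℝ) : ℝ :=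
  √((deriv γ t 0) ^ 2 + (deriv γ t 1) ^ 2 + (1 + f A (γ t 1)) * (deriv γ t 2) ^ 2)

section SphericalDistance

lemma abs_deriv_arcsin_mul_le {r x d v : ℝ} (hr₀ : 0 < r) (hr₁ : r < 1) (hx : |x| ≤ 1)
    (hv : 0 ≤ v) (hd : |d| ≤ √(1 - x ^ 2) * v) :
    |1 / √(1 - (r * x) ^ 2) * (r * d)| ≤ v := by
  have hr : r ^ 2 < 1 := pow_lt_one₀ hr₀.le hr₁ two_ne_zero
  have hx' : x ^ 2 ≤ 1 := (sq_le_one_iff_abs_le_one x).2 hx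
  have hpos : 0 < √(1 - (r * x) ^ 2) := sqrt_pos.2 (by nlinarith [sq_nonneg r])
  have hcontract : r * √(1 - x ^ 2) ≤ √(1 - (r * x) ^ 2) :=
    le_sqrt_of_sq_le (by rw [mul_pow, sq_sqrt (by linarith)]; linarith)
  rw [one_div, abs_mul, abs_mul, abs_of_pos (inv_pos.2 hpos), abs_of_pos hr₀,
    inv_mul_le_iff₀ hpos]
  calc r * |d| ≤ r * (√(1 - x ^ 2) * v) := by gcongr
    _ = r * √(1 - x ^ 2) * v := by ring
    _ ≤ √(1 - (r * x) ^ 2) * v := by gcongr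

variable {t₀ t₁ : ℝ}

lemma abs_arcsin_sub_arcsin_le_integral {φ φ' v : ℝ → ℝ} (ht : t₀ ≤ t₁)
    (hcont : ContinuousOn φ (Set.Icc t₀ t₁))
    (hderiv : ∀ t ∈ Set.Ioo t₀ t₁, HasDerivAt φ (φ' t) t)
    (hφ : ∀ t ∈ Set.Ioo t₀ t₁, |φ t| ≤ 1)
    (hv : ∀ t ∈ Set.Ioo t₀ t₁, 0 ≤ v t) (hvint : IntervalIntegrable v volume t₀ t₁)
    (hbound : ∀ t ∈ Set.Ioo t₀ t₁, |φ' t| ≤ √(1 - φ t ^ 2) * v t) :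
    |arcsin (φ t₁) - arcsin (φ t₀)| ≤ ∫ t in t₀..t₁, v t := by
  -- `arcsin` is not differentiable at `±1`, so contract `φ` by a factor `r < 1` and let `r → 1`.
  have contracted (r : ℝ) (hr : r ∈ Set.Ioo 0 1) :
      |arcsin (r * φ t₁) - arcsin (r * φ t₀)| ≤ ∫ t in t₀..t₁, v t := by
    have harcsin (t : ℝ) (h : t ∈ Set.Ioo t₀ t₁) :
        HasDerivAt (fun t ↦ arcsin (r * φ t)) (1 / √(1 - (r * φ t) ^ 2) * (r * φ' t)) t := by
      have hlt : |r * φ t| < 1 := by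
        rw [abs_mul, abs_of_pos hr.1]
        exact mul_lt_one_of_nonneg_of_lt_one_left hr.1.le hr.2 (hφ t h)
      obtain ⟨h₁, h₂⟩ := abs_lt.1 hlt
      exact (hasDerivAt_arcsin h₁.ne' h₂.ne).comp t ((hderiv t h).const_mul r)
    refine norm_sub_le_integral_of_norm_deriv_le_of_le (f := fun t ↦ arcsin (r * φ t)) ht
      (continuous_arcsin.comp_continuousOn (continuousOn_const.mul hcont))
      (fun t h ↦ (harcsin t h).differentiableAt.differentiableWithinAt)
      (.of_forall fun t h ↦ ?_) hvint
    rw [(harcsin t h).deriv]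
    exact abs_deriv_arcsin_mul_le hr.1 hr.2 (hφ t h) (hv t h) (hbound t h)
  have hlim : Filter.Tendsto (fun r ↦ |arcsin (r * φ t₁) - arcsin (r * φ t₀)|)
      (nhdsWithin 1 (Set.Iio 1)) (nhds |arcsin (1 * φ t₁) - arcsin (1 * φ t₀)|) :=
    (Continuous.tendsto (by fun_prop) 1).mono_left nhdsWithin_le_nhds
  rw [one_mul, one_mul] at hlim
  exact le_of_tendsto hlim (Filter.eventually_of_mem (Ioo_mem_nhdsLT zero_lt_one) contracted)

lemma abs_cos_mul_sin_le_one (α β : ℝ) : |cos α * sin β| ≤ 1 := by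
  rw [abs_mul]
  exact mul_le_one₀ (abs_cos_le_one α) (abs_nonneg _) (abs_sin_le_one β)

lemma abs_deriv_cos_mul_sin_le (α β α' β' : ℝ) :
    |-sin α * α' * sin β + cos α * (cos β * β')| ≤
      √(1 - (cos α * sin β) ^ 2) * √(α' ^ 2 + (cos α * β') ^ 2) := by
  have hcoeff : 1 - (cos α * sin β) ^ 2 = (sin α * sin β) ^ 2 + cos β ^ 2 := by
    linear_combination -sin β ^ 2 * sin_sq_add_cos_sq α - sin_sq_add_cos_sq β
  rw [hcoeff, ← sqrt_mul (by positivity)]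
  -- Cauchy–Schwarz for `(-sin α sin β, cos β)` and `(α', cos α β')`
  exact abs_le_sqrt (by nlinarith [sq_nonneg (sin α * sin β * (cos α * β') + cos β * α')])

lemma abs_arcsin_cos_mul_sin_sub_le_integral {α β α' β' : ℝ → ℝ} (ht : t₀ ≤ t₁)
    (hα : ∀ t, HasDerivAt α (α' t) t) (hβ : ∀ t, HasDerivAt β (β' t) t)
    (hα' : Continuous α') (hβ' : Continuous β') :
    |arcsin (cos (α t₁) * sin (β t₁)) - arcsin (cos (α t₀) * sin (β t₀))| ≤
      ∫ t in t₀..t₁, √(α' t ^ 2 + (cos (α t) * β' t) ^ 2) := by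
  have hαc : Continuous α := continuous_iff_continuousAt.2 fun t ↦ (hα t).continuousAt
  have hβc : Continuous β := continuous_iff_continuousAt.2 fun t ↦ (hβ t).continuousAt
  exact abs_arcsin_sub_arcsin_le_integral (φ := fun t ↦ cos (α t) * sin (β t)) ht
    (by fun_prop) (fun t _ ↦ (hα t).cos.mul (hβ t).sin)
    (fun t _ ↦ abs_cos_mul_sin_le_one _ _) (fun t _ ↦ sqrt_nonneg _)
    (Continuous.intervalIntegrable (by fun_prop) _ _)
    (fun t _ ↦ abs_deriv_cos_mul_sin_le _ _ _ _)

end SphericalDistance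

section Length

variable {A : ℝ} {γ : ℝ → E3}

lemma f_zero (A : ℝ) : f A 0 = 2 * A := by
  simp only [f, mul_zero, cos_zero]
  ring

lemma one_add_f_zero_mul_cos_sq_le (A y : ℝ) :
    (1 + f A 0) * cos (π / 2 * y) ^ 2 ≤ 1 + f A y := by
  have hcos : cos (π / 2 * y) ^ 2 = 1 / 2 + cos (π * y) / 2 := by
    rw [cos_sq]
    ring_nf
  rw [f_zero, hcos, f]
  linarith [cos_le_one (π * y)]

lemma hasDerivAt_apply (hγ : ContDiff ℝ 1 γ) (i : Fin 3) (t : ℝ) :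
    HasDerivAt (fun t ↦ γ t i) (deriv γ t i) t :=
  (EuclideanSpace.proj i : E3 →L[ℝ] ℝ).hasFDerivAt.comp_hasDerivAt t
    (hγ.differentiable one_ne_zero t).hasDerivAt

lemma continuous_deriv_apply (hγ : ContDiff ℝ 1 γ) (i : Fin 3) :
    Continuous fun t ↦ deriv γ t i :=
  (EuclideanSpace.proj i : E3 →L[ℝ] ℝ).continuous.comp hγ.continuous_deriv_one

lemma continuous_gSpeed (A : ℝ) (hγ : ContDiff ℝ 1 γ) : Continuous (gSpeed A γ) := by
  have := continuous_deriv_apply hγ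
  unfold gSpeed f
  fun_prop

lemma sphere_speed_le_gSpeed (hA : 0 ≤ 1 + f A 0) (γ : ℝ → E3) (t : ℝ) :
    √((π / 2 * deriv γ t 1) ^ 2 +
        (cos (π / 2 * γ t 1) * (π / 2 * √(1 + f A 0) * deriv γ t 2)) ^ 2) ≤
      π / 2 * gSpeed A γ t := by
  have hmetric := mul_le_mul_of_nonneg_right (one_add_f_zero_mul_cos_sq_le A (γ t 1))
    (sq_nonneg (deriv γ t 2))
  calc
    _ = √((π / 2) ^ 2 * ((deriv γ t 1) ^ 2 +
          (1 + f A 0) * cos (π / 2 * γ t 1) ^ 2 * (deriv γ t 2) ^ 2)) := by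
      simp only [mul_pow, sq_sqrt hA]
      ring_nf
    _ = π / 2 * √((deriv γ t 1) ^ 2 +
          (1 + f A 0) * cos (π / 2 * γ t 1) ^ 2 * (deriv γ t 2) ^ 2) := by
      rw [sqrt_mul (sq_nonneg _), sqrt_sq (by positivity)]
    _ ≤ π / 2 * gSpeed A γ t := by
      unfold gSpeed
      gcongr
      linarith [sq_nonneg (deriv γ t 0)]

lemma arcsin_sin_pi_div_two_mul {x : ℝ} (hx : |x| ≤ 1) :
    arcsin (sin (π / 2 * x)) = π / 2 * x := by
  obtain ⟨hx₁, hx₂⟩ := abs_le.1 hx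
  exact arcsin_sin (by nlinarith [pi_pos]) (by nlinarith [pi_pos])

lemma sqrt_mul_abs_sub_le_Lg (hA : 0 ≤ 1 + f A 0) (hγ : ContDiff ℝ 1 γ)
    (hy₀ : γ 0 1 = 0) (hy₁ : γ 1 1 = 0)
    (hz₀ : |√(1 + f A 0) * γ 0 2| ≤ 1) (hz₁ : |√(1 + f A 0) * γ 1 2| ≤ 1) :
    √(1 + f A 0) * |γ 1 2 - γ 0 2| ≤ Lg A γ := by
  set H := √(1 + f A 0)
  have hdist := abs_arcsin_cos_mul_sin_sub_le_integral zero_le_one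
    (fun t ↦ (hasDerivAt_apply hγ 1 t).const_mul (π / 2))
    (fun t ↦ (hasDerivAt_apply hγ 2 t).const_mul (π / 2 * H))
    ((continuous_deriv_apply hγ 1).const_mul _) ((continuous_deriv_apply hγ 2).const_mul _)
  simp only [hy₀, hy₁, mul_zero, cos_zero, one_mul, mul_assoc (π / 2) H,
    arcsin_sin_pi_div_two_mul hz₀, arcsin_sin_pi_div_two_mul hz₁] at hdist
  have := continuous_deriv_apply hγ
  refine le_of_mul_le_mul_left ?_ pi_div_two_pos
  calc π / 2 * (H * |γ 1 2 - γ 0 2|) = |π / 2 * (H * γ 1 2) - π / 2 * (H * γ 0 2)| := by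
        rw [← mul_sub, ← mul_sub, abs_mul, abs_mul, abs_of_pos pi_div_two_pos,
          abs_of_nonneg (sqrt_nonneg _)]
    _ ≤ _ := hdist
    _ ≤ ∫ t in (0 : ℝ)..1, π / 2 * gSpeed A γ t := by
        refine intervalIntegral.integral_mono zero_le_one
          (Continuous.intervalIntegrable (by fun_prop) _ _)
          (((continuous_gSpeed A hγ).const_mul _).intervalIntegrable _ _) fun t ↦ ?_
        simpa only [mul_assoc] using sphere_speed_le_gSpeed hA γ t
    _ = π / 2 * Lg A γ := intervalIntegral.integral_const_mul _ _

lemma Lg_nonneg (A : ℝ) (γ : ℝ → E3) : 0 ≤ Lg A γ :=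
  intervalIntegral.integral_nonneg zero_le_one fun _ _ ↦ sqrt_nonneg _

lemma Lg_lineMap (A : ℝ) {p q : E3} (hz : p 2 = q 2) :
    Lg A (AffineMap.lineMap p q) = dist p q := by
  have hderiv (t : ℝ) : deriv (AffineMap.lineMap p q : ℝ → E3) t = q - p :=
    AffineMap.hasDerivAt_lineMap.deriv
  simp [Lg, hderiv, hz, dist_comm p q, EuclideanSpace.dist_eq, Fin.sum_univ_three,
    Real.dist_eq, sq_abs]

end Length

section Distance

variable {A : ℝ} {p q : E3}

lemma dg_le_Lg {γ : ℝ → E3} (hγ : ContDiff ℝ 1 γ) (h₀ : γ 0 = p) (h₁ : γ 1 = q) :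
    dg A p q ≤ Lg A γ :=
  csInf_le ⟨0, by rintro _ ⟨γ, -, -, -, rfl⟩; exact Lg_nonneg A γ⟩ ⟨γ, hγ, h₀, h₁, rfl⟩

lemma le_dg {L : ℝ} (h : ∀ γ : ℝ → E3, ContDiff ℝ 1 γ → γ 0 = p → γ 1 = q → L ≤ Lg A γ) :
    L ≤ dg A p q :=
  le_csInf ⟨_, AffineMap.lineMap p q, AffineMap.contDiff_lineMap p q,
      AffineMap.lineMap_apply_zero p q, AffineMap.lineMap_apply_one p q, rfl⟩
    (by rintro _ ⟨γ, hγ, h₀, h₁, rfl⟩; exact h γ hγ h₀ h₁)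

lemma dg_le_dist (A : ℝ) (hz : p 2 = q 2) : dg A p q ≤ dist p q :=
  Lg_lineMap A hz ▸ dg_le_Lg (AffineMap.contDiff_lineMap p q)
    (AffineMap.lineMap_apply_zero p q) (AffineMap.lineMap_apply_one p q)

lemma sqrt_mul_abs_sub_le_dg (hA : 0 ≤ 1 + f A 0) (hp : p 1 = 0) (hq : q 1 = 0)
    (hp' : |√(1 + f A 0) * p 2| ≤ 1) (hq' : |√(1 + f A 0) * q 2| ≤ 1) :
    √(1 + f A 0) * |q 2 - p 2| ≤ dg A p q := by
  refine le_dg fun γ hγ h₀ h₁ ↦ ?_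
  subst h₀ h₁
  exact sqrt_mul_abs_sub_le_Lg hA hγ hp hq hp' hq'

lemma dg_xAxis_le (A c : ℝ) : dg A (pt (-c) 0 0) (pt c 0 0) ≤ 2 * |c| := by
  calc dg A (pt (-c) 0 0) (pt c 0 0) ≤ dist (pt (-c) 0 0) (pt c 0 0) := dg_le_dist A rfl
    _ = |-c - c| := by
        simp [EuclideanSpace.dist_eq, Fin.sum_univ_three, pt, Real.dist_eq, sqrt_sq_eq_abs]
    _ = 2 * |c| := by rw [← abs_two, ← abs_mul, ← abs_neg]; ring_nf

lemma le_dg_zAxis {b : ℝ} (hA : 0 ≤ 1 + f A 0) (hb : √(1 + f A 0) * |b| ≤ 1) :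
    2 * |b| * √(1 + f A 0) ≤ dg A (pt 0 0 b) (pt 0 0 (-b)) := by
  have hb_pos : |√(1 + f A 0) * b| ≤ 1 := by rwa [abs_mul, abs_of_nonneg (sqrt_nonneg _)]
  have hb_neg : |√(1 + f A 0) * -b| ≤ 1 := by rwa [mul_neg, abs_neg]
  calc 2 * |b| * √(1 + f A 0) = √(1 + f A 0) * |-b - b| := by
        rw [← abs_two, ← abs_mul, ← abs_neg]; ring_nf
    _ ≤ dg A (pt 0 0 b) (pt 0 0 (-b)) :=
        sqrt_mul_abs_sub_le_dg (p := pt 0 0 b) (q := pt 0 0 (-b)) hA rfl rfl hb_pos hb_neg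

end Distance

theorem dg_pw_lt_dg_uv_general (A : ℝ) (hA : -(1 / 2) < A) :
    ∃ ε₀ > (0:ℝ), ∀ ε ξ : ℝ, 0 < ε → ε < ε₀ → |1 + ξ| < 1 + ξ₀ A →
      dg A (pt (-(a * ε * (1 + ξ))) 0 0) (pt (a * ε * (1 + ξ)) 0 0)
        < dg A (pt 0 0 (a * ε)) (pt 0 0 (-(a * ε))) := by
  have ha : 0 < a := one_div_pos.2 (sqrt_pos.2 two_pos)
  have hA' : 0 < 1 + f A 0 := by rw [f_zero]; linarith
  have hHa : 0 < √(1 + f A 0) * a := mul_pos (sqrt_pos.2 hA') ha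
  refine ⟨1 / (√(1 + f A 0) * a), one_div_pos.2 hHa, fun ε ξ hε hε₀ hξ ↦ ?_⟩
  rw [lt_div_iff₀ hHa] at hε₀
  have hb : 0 < a * ε := mul_pos ha hε
  calc dg A (pt (-(a * ε * (1 + ξ))) 0 0) (pt (a * ε * (1 + ξ)) 0 0)
      ≤ 2 * |a * ε * (1 + ξ)| := dg_xAxis_le A _
    _ = 2 * |a * ε| * |1 + ξ| := by rw [abs_mul, mul_assoc]
    _ < 2 * |a * ε| * √(1 + f A 0) := by
        gcongr
        rwa [ξ₀, add_sub_cancel] at hξ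
    _ ≤ dg A (pt 0 0 (a * ε)) (pt 0 0 (-(a * ε))) :=
        le_dg_zAxis hA'.le (by rw [abs_of_pos hb]; linarith)

/-- For sufficiently small `ε` and any `0 ≤ ξ < ξ₀`, the geodesic distance
between the two points on the `x`-axis is strictly smaller than the geodesic
distance between the two points on the `z`-axis. -/
theorem dg_pw_lt_dg_uv (A : ℝ) (hA0 : 0 < A) (hA : A ≤ 3 / 8) :
    ∃ ε₀ > (0:ℝ), ∀ ε ξ : ℝ, 0 < ε → ε < ε₀ → 0 ≤ ξ → ξ < ξ₀ A →
      dg A (pt (-(a * ε * (1 + ξ))) 0 0) (pt (a * ε * (1 + ξ)) 0 0)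
        < dg A (pt 0 0 (a * ε)) (pt 0 0 (-(a * ε))) := by
  obtain ⟨ε₀, hε₀, h⟩ := dg_pw_lt_dg_uv_general A (by linarith)
  exact ⟨ε₀, hε₀, fun ε ξ hε hlt hξ hξ' ↦
    h ε ξ hε hlt (by rw [abs_of_nonneg (by linarith)]; linarith)⟩
end
end
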